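/- arXiv:2404.08410 — 4 statements merged into one kernel-verified Lean document; each statement's English description precedes it below -/
import Mathlib

section
/- Let E be a real inner product space, let θ₁, θ₂ ∈ E with ‖θ₁‖ = ‖θ₂‖ = 1, and let 0 < ρ₁ < ρ₂ < 1. Set x₁ = ρ₁θ₁, x₂ = ρ₂θ₂, s₀ = (1 − ρ₁²)/(ρ₂² − ρ₁²), and x₀ = (1 − s₀)x₁ + s₀x₂. Then ‖x₀‖ ≥ (1 + ρ₁ρ₂)/(ρ₁ + ρ₂) > 1; in particular x₀ lies strictly outside the closed unit ball. -/
theorem stmt_7 {E : Type*} [NormedAddCommGroup E] [InnerProductSpace ℝ E]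
    (θ₁ θ₂ : E) (hθ₁ : ‖θ₁‖ = 1) (hθ₂ : ‖θ₂‖ = 1)
    (ρ₁ ρ₂ : ℝ) (h0 : 0 < ρ₁) (h12 : ρ₁ < ρ₂) (h21 : ρ₂ < 1)
    (x₁ x₂ : E) (hx₁ : x₁ = ρ₁ • θ₁) (hx₂ : x₂ = ρ₂ • θ₂)
    (s₀ : ℝ) (hs₀ : s₀ = (1 - ρ₁ ^ 2) / (ρ₂ ^ 2 - ρ₁ ^ 2))
    (x₀ : E) (hx₀ : x₀ = (1 - s₀) • x₁ + s₀ • x₂) :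
    ‖x₀‖ ≥ (1 + ρ₁ * ρ₂) / (ρ₁ + ρ₂) ∧ (1 + ρ₁ * ρ₂) / (ρ₁ + ρ₂) > 1 := by
  have hD : 0 < ρ₂ ^ 2 - ρ₁ ^ 2 := by nlinarith
  have hs1 : 1 < s₀ := by
    rw [hs₀, lt_div_iff₀ hD]
    nlinarith
  have hsum : 0 < ρ₁ + ρ₂ := by linarith
  refine ⟨?_, ?_⟩
  · have n1 : ‖(1 - s₀) • x₁‖ = (s₀ - 1) * ρ₁ := by
      rw [hx₁, norm_smul, norm_smul, hθ₁, Real.norm_eq_abs, Real.norm_eq_abs,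
        abs_of_neg (by linarith), abs_of_pos h0]
      ring
    have n2 : ‖s₀ • x₂‖ = s₀ * ρ₂ := by
      rw [hx₂, norm_smul, norm_smul, hθ₂, Real.norm_eq_abs, Real.norm_eq_abs,
        abs_of_pos (by linarith), abs_of_pos (by linarith)]
      ring
    have h3 : ‖s₀ • x₂‖ ≤ ‖x₀‖ + ‖(1 - s₀) • x₁‖ := by
      have : s₀ • x₂ = x₀ - (1 - s₀) • x₁ := by rw [hx₀]; abel
      rw [this]
      exact norm_sub_le _ _
    have key : (1 + ρ₁ * ρ₂) / (ρ₁ + ρ₂) = s₀ * ρ₂ - (s₀ - 1) * ρ₁ := by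
      have hs : s₀ * (ρ₂ ^ 2 - ρ₁ ^ 2) = 1 - ρ₁ ^ 2 := by
        rw [hs₀]; exact div_mul_cancel₀ _ hD.ne'
      rw [div_eq_iff hsum.ne']
      linear_combination -hs
    rw [n1, n2] at h3
    linarith
  · rw [gt_iff_lt, lt_div_iff₀ hsum]
    nlinarith
end

section
/- Let E be a real inner product space, let θ₁, θ₂ ∈ E with ‖θ₁‖ = ‖θ₂‖ = 1, and let 0 < ρ₁ < ρ₂ < 1. Set x₁ = ρ₁θ₁, x₂ = ρ₂θ₂, and s₀ = (1 − ρ₁²)/(ρ₂² − ρ₁²). Then s₀(s₀ − 1)·‖x₂ − x₁‖² = ((1 − ρ₁²)(1 − ρ₂²)/(ρ₁ + ρ₂)²)·(1 + ρ₁ρ₂·‖θ₂ − θ₁‖²/(ρ₂ − ρ₁)²). -/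
theorem stmt_8 {E : Type*} [NormedAddCommGroup E] [InnerProductSpace ℝ E]
    (θ₁ θ₂ : E) (hθ₁ : ‖θ₁‖ = 1) (hθ₂ : ‖θ₂‖ = 1)
    (ρ₁ ρ₂ : ℝ) (h0 : 0 < ρ₁) (h12 : ρ₁ < ρ₂) (h21 : ρ₂ < 1)
    (x₁ x₂ : E) (hx₁ : x₁ = ρ₁ • θ₁) (hx₂ : x₂ = ρ₂ • θ₂)
    (s₀ : ℝ) (hs₀ : s₀ = (1 - ρ₁ ^ 2) / (ρ₂ ^ 2 - ρ₁ ^ 2)) :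
    s₀ * (s₀ - 1) * ‖x₂ - x₁‖ ^ 2 =
      ((1 - ρ₁ ^ 2) * (1 - ρ₂ ^ 2) / (ρ₁ + ρ₂) ^ 2) *
        (1 + ρ₁ * ρ₂ * ‖θ₂ - θ₁‖ ^ 2 / (ρ₂ - ρ₁) ^ 2) := by
  have hx : ‖x₂ - x₁‖ ^ 2 = (ρ₂ - ρ₁) ^ 2 + ρ₁ * ρ₂ * ‖θ₂ - θ₁‖ ^ 2 := by
    rw [hx₁, hx₂, norm_sub_sq_real, norm_sub_sq_real, norm_smul, norm_smul,
      real_inner_smul_left, real_inner_smul_right, hθ₁, hθ₂, mul_one, mul_one,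
      Real.norm_eq_abs, Real.norm_eq_abs, sq_abs, sq_abs]
    ring
  rw [hx]
  have hd : ρ₂ - ρ₁ ≠ 0 := by linarith
  have hp : ρ₁ + ρ₂ ≠ 0 := by linarith
  have hf : ρ₂ ^ 2 - ρ₁ ^ 2 = (ρ₂ - ρ₁) * (ρ₁ + ρ₂) := by ring
  have hs1 : s₀ - 1 = (1 - ρ₂ ^ 2) / ((ρ₂ - ρ₁) * (ρ₁ + ρ₂)) := by
    rw [hs₀, hf, eq_div_iff (mul_ne_zero hd hp), sub_mul,
      div_mul_cancel₀ _ (mul_ne_zero hd hp)]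
    ring
  rw [hs1, hs₀, hf]
  generalize ‖θ₂ - θ₁‖ ^ 2 = t
  field_simp
end

section
/- Let E be a real inner product space, let θ₁, θ₂ ∈ E with ‖θ₁‖ = ‖θ₂‖ = 1, and let 0 < ρ₊ < ρ₁ < ρ₂ < 1. Set s₀ = (1 − ρ₁²)/(ρ₂² − ρ₁²). If (ρ₂ − ρ₁)² · ((ρ₊⁻¹ − ρ₊)² − (ρ₁⁻¹ − ρ₁)²) ≥ ρ₁ρ₂(ρ₁⁻¹ − ρ₁)² · ‖θ₂ − θ₁‖², then s₀(s₀ − 1)·‖ρ₂θ₂ − ρ₁θ₁‖² ≤ (1/4)(ρ₊⁻¹ − ρ₊)². -/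
theorem stmt_10 {E : Type*} [NormedAddCommGroup E] [InnerProductSpace ℝ E]
    (θ₁ θ₂ : E) (hθ₁ : ‖θ₁‖ = 1) (hθ₂ : ‖θ₂‖ = 1)
    (ρp ρ₁ ρ₂ : ℝ) (h0 : 0 < ρp) (hp1 : ρp < ρ₁) (h12 : ρ₁ < ρ₂) (h21 : ρ₂ < 1)
    (s₀ : ℝ) (hs₀ : s₀ = (1 - ρ₁ ^ 2) / (ρ₂ ^ 2 - ρ₁ ^ 2))
    (hyp : (ρ₂ - ρ₁) ^ 2 * ((ρp⁻¹ - ρp) ^ 2 - (ρ₁⁻¹ - ρ₁) ^ 2) ≥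
      ρ₁ * ρ₂ * (ρ₁⁻¹ - ρ₁) ^ 2 * ‖θ₂ - θ₁‖ ^ 2) :
    s₀ * (s₀ - 1) * ‖ρ₂ • θ₂ - ρ₁ • θ₁‖ ^ 2 ≤ (1 / 4) * (ρp⁻¹ - ρp) ^ 2 := by
  have h1 : 0 < ρ₁ := h0.trans hp1
  have h2 : 0 < ρ₂ := h1.trans h12
  have e1 : ‖ρ₂ • θ₂ - ρ₁ • θ₁‖ ^ 2 = (ρ₂ - ρ₁) ^ 2 + ρ₁ * ρ₂ * ‖θ₂ - θ₁‖ ^ 2 := by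
    rw [norm_sub_sq_real, norm_sub_sq_real, norm_smul, norm_smul, hθ₁, hθ₂,
      real_inner_smul_left, real_inner_smul_right, mul_one, mul_one, Real.norm_eq_abs,
      Real.norm_eq_abs, sq_abs, sq_abs]
    ring
  have u1 : 0 < 1 - ρ₁ ^ 2 := by nlinarith
  have u2 : 0 < 1 - ρ₂ ^ 2 := by nlinarith
  have hd : 0 < ρ₂ - ρ₁ := by linarith
  have hq : ρ₂ ^ 2 - ρ₁ ^ 2 = (ρ₂ - ρ₁) * (ρ₁ + ρ₂) := by ring
  have e2 : s₀ * (s₀ - 1) =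
      (1 - ρ₁ ^ 2) * (1 - ρ₂ ^ 2) / ((ρ₂ - ρ₁) ^ 2 * (ρ₁ + ρ₂) ^ 2) := by
    rw [hs₀, hq]
    field_simp
    ring
  have e3 : (ρ₁⁻¹ - ρ₁) ^ 2 = (1 - ρ₁ ^ 2) ^ 2 / ρ₁ ^ 2 := by
    field_simp
  have hA : 0 < (ρ₁⁻¹ - ρ₁) ^ 2 := by rw [e3]; positivity
  have hS : 0 ≤ s₀ * (s₀ - 1) := by rw [e2]; positivity
  have key : s₀ * (s₀ - 1) * (ρ₂ - ρ₁) ^ 2 ≤ (ρ₁⁻¹ - ρ₁) ^ 2 / 4 := by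
    have : s₀ * (s₀ - 1) * (ρ₂ - ρ₁) ^ 2 =
        (1 - ρ₁ ^ 2) * (1 - ρ₂ ^ 2) / (ρ₁ + ρ₂) ^ 2 := by
      rw [e2]; field_simp
    rw [this, e3, div_div]
    apply div_le_div₀ (by positivity) _ (by positivity) (by nlinarith)
    rw [sq (1 - ρ₁ ^ 2)]
    exact mul_le_mul_of_nonneg_left (by nlinarith) u1.le
  rw [e1]
  set A := (ρ₁⁻¹ - ρ₁) ^ 2
  set P := (ρp⁻¹ - ρp) ^ 2 with hP
  have hP0 : 0 ≤ P := sq_nonneg _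
  set S := s₀ * (s₀ - 1)
  have k1 := mul_le_mul_of_nonneg_right key hP0
  have k2 := mul_le_mul_of_nonneg_left hyp hS
  refine le_of_mul_le_mul_left ?_ hA
  linarith
end

section
/- Let E be a real inner product space, let θ₁, θ₂ ∈ E with ‖θ₁‖ = ‖θ₂‖ = 1, and let 0 < ρ₊ < ρ₁ < ρ₂ < 1 satisfy (ρ₂ − ρ₁)² · ((ρ₊⁻¹ − ρ₊)² − (ρ₁⁻¹ − ρ₁)²) ≥ ρ₁ρ₂(ρ₁⁻¹ − ρ₁)² · ‖θ₂ − θ₁‖². Then there exist c ∈ E and R > 0 such that ‖c‖² = R² + 1, ‖c‖ − R ≥ ρ₊, and the inversion F(x) = (R²/‖x − c‖²)(x − c) + c maps ρ₂θ₂ to ρ₁θ₁. -/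
set_option maxHeartbeats 1000000 in
theorem stmt_13 {E : Type*} [NormedAddCommGroup E] [InnerProductSpace ℝ E]
    (θ₁ θ₂ : E) (hθ₁ : ‖θ₁‖ = 1) (hθ₂ : ‖θ₂‖ = 1)
    (ρp ρ₁ ρ₂ : ℝ) (h0 : 0 < ρp) (hp1 : ρp < ρ₁) (h12 : ρ₁ < ρ₂) (h21 : ρ₂ < 1)
    (hyp : (ρ₂ - ρ₁) ^ 2 * ((ρp⁻¹ - ρp) ^ 2 - (ρ₁⁻¹ - ρ₁) ^ 2) ≥
      ρ₁ * ρ₂ * (ρ₁⁻¹ - ρ₁) ^ 2 * ‖θ₂ - θ₁‖ ^ 2) :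
    ∃ (c : E) (R : ℝ), 0 < R ∧ ‖c‖ ^ 2 = R ^ 2 + 1 ∧ ‖c‖ - R ≥ ρp ∧
      (R ^ 2 / ‖ρ₂ • θ₂ - c‖ ^ 2) • (ρ₂ • θ₂ - c) + c = ρ₁ • θ₁ := by
  have h1 : 0 < ρ₁ := h0.trans hp1
  have h2 : 0 < ρ₂ := h1.trans h12
  obtain ⟨a, ha⟩ : ∃ a, a = 1 - ρ₁ ^ 2 := ⟨_, rfl⟩
  obtain ⟨b, hb⟩ : ∃ b, b = 1 - ρ₂ ^ 2 := ⟨_, rfl⟩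
  have hb0 : 0 < b := by rw [hb]; nlinarith
  have hab : 0 < a - b := by rw [ha, hb]; nlinarith
  have ha0 : 0 < a := by linarith
  have hD : ‖θ₂ - θ₁‖ ^ 2 = 2 - 2 * inner ℝ θ₂ θ₁ := by
    rw [norm_sub_sq_real, hθ₁, hθ₂]; ring
  obtain ⟨N, hN⟩ : ∃ N, N = ‖ρ₁ • θ₁ - ρ₂ • θ₂‖ ^ 2 := ⟨_, rfl⟩
  have hN1 : N = ρ₁ ^ 2 + ρ₂ ^ 2 - 2 * ρ₁ * ρ₂ * inner ℝ θ₂ θ₁ := by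
    rw [hN, norm_sub_sq_real, norm_smul, norm_smul, hθ₁, hθ₂, real_inner_smul_left,
      real_inner_smul_right, real_inner_comm]
    simp; ring
  have hN2 : N = (ρ₂ - ρ₁) ^ 2 + ρ₁ * ρ₂ * ‖θ₂ - θ₁‖ ^ 2 := by rw [hN1, hD]; ring
  have hd : 0 < (ρ₂ - ρ₁) ^ 2 := by have : 0 < ρ₂ - ρ₁ := by linarith
                                    positivity
  have hN0 : 0 < N := by rw [hN2]; positivity
  have hyp2 : (ρ₁⁻¹ - ρ₁) ^ 2 * N ≤ (ρ₂ - ρ₁) ^ 2 * (ρp⁻¹ - ρp) ^ 2 := by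
    rw [hN2]; linarith
  have hR2 : 0 < a * b * N / (a - b) ^ 2 := by positivity
  obtain ⟨R, hR⟩ : ∃ R, R = √(a * b * N / (a - b) ^ 2) := ⟨_, rfl⟩
  have hR0 : 0 < R := by rw [hR]; exact Real.sqrt_pos.2 hR2
  have hRs : R ^ 2 = a * b * N / (a - b) ^ 2 := by rw [hR, Real.sq_sqrt hR2.le]
  obtain ⟨c, hc⟩ : ∃ c : E, c = (a - b)⁻¹ • (a • ρ₂ • θ₂ - b • ρ₁ • θ₁) := ⟨_, rfl⟩
  have hcn : ‖c‖ ^ 2 = R ^ 2 + 1 := by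
    have e : ‖a • ρ₂ • θ₂ - b • ρ₁ • θ₁‖ ^ 2
        = a ^ 2 * ρ₂ ^ 2 + b ^ 2 * ρ₁ ^ 2 - 2 * a * b * ρ₁ * ρ₂ * inner ℝ θ₂ θ₁ := by
      rw [norm_sub_sq_real]
      simp only [norm_smul, hθ₁, hθ₂, real_inner_smul_left, real_inner_smul_right, mul_pow,
        Real.norm_eq_abs, sq_abs]
      ring
    rw [hc, norm_smul, mul_pow, e, hRs, hN1, Real.norm_eq_abs, sq_abs]
    have q1 : ρ₁ ^ 2 = 1 - a := by linarith
    have q2 : ρ₂ ^ 2 = 1 - b := by linarith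
    field_simp
    simp only [q1, q2]
    ring
  refine ⟨c, R, hR0, hcn, ?_, ?_⟩
  · have hP : 0 < ρp⁻¹ - ρp := by
      have : 1 < ρp⁻¹ := (one_lt_inv₀ h0).2 (by linarith)
      linarith
    have hk : 2 * R ≤ ρp⁻¹ - ρp := by
      refine (sq_le_sq₀ (by positivity) (hP.le)).1 ?_
      have e1 : ρ₁⁻¹ - ρ₁ = a / ρ₁ := by rw [ha]; field_simp
      have e2 : a - b = (ρ₂ - ρ₁) * (ρ₂ + ρ₁) := by rw [ha, hb]; ring
      have h3 : (ρ₁⁻¹ - ρ₁) ^ 2 * N / (ρ₂ - ρ₁) ^ 2 ≤ (ρp⁻¹ - ρp) ^ 2 := by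
        rw [div_le_iff₀ hd]; linarith
      refine le_trans ?_ h3
      rw [mul_pow, hRs, e1, e2, mul_pow, div_pow]
      have h4 : 4 * b * ρ₁ ^ 2 ≤ a * (ρ₂ + ρ₁) ^ 2 := by
        have : 4 * ρ₁ ^ 2 ≤ (ρ₂ + ρ₁) ^ 2 := by nlinarith
        calc 4 * b * ρ₁ ^ 2 = b * (4 * ρ₁ ^ 2) := by ring
          _ ≤ a * (ρ₂ + ρ₁) ^ 2 := by gcongr; linarith
      have h5 : 2 ^ 2 * (a * b * N / ((ρ₂ - ρ₁) ^ 2 * (ρ₂ + ρ₁) ^ 2))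
          = (4 * b * ρ₁ ^ 2) * (a * N / ((ρ₂ - ρ₁) ^ 2 * (ρ₂ + ρ₁) ^ 2 * ρ₁ ^ 2)) := by
        field_simp; ring
      have h6 : a ^ 2 / ρ₁ ^ 2 * N / (ρ₂ - ρ₁) ^ 2
          = (a * (ρ₂ + ρ₁) ^ 2) * (a * N / ((ρ₂ - ρ₁) ^ 2 * (ρ₂ + ρ₁) ^ 2 * ρ₁ ^ 2)) := by
        field_simp
      rw [h5, h6]
      gcongr
    have hk2 : 2 * R * ρp ≤ 1 - ρp ^ 2 := by
      calc 2 * R * ρp ≤ (ρp⁻¹ - ρp) * ρp := by gcongr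
        _ = 1 - ρp ^ 2 := by field_simp
    have : R + ρp ≤ ‖c‖ := by
      refine (sq_le_sq₀ (by positivity) ((norm_nonneg c))).1 ?_
      rw [hcn, add_sq]; linarith
    linarith
  · have hy : ρ₂ • θ₂ - c = (b / (a - b)) • (ρ₁ • θ₁ - ρ₂ • θ₂) := by
      rw [hc]
      match_scalars <;> field_simp <;> ring
    have hq : R ^ 2 / ‖ρ₂ • θ₂ - c‖ ^ 2 = a / b := by
      rw [hy, norm_smul, mul_pow, ← hN, hRs, Real.norm_eq_abs, sq_abs]
      field_simp
    rw [hq, hy, hc]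
    match_scalars <;> field_simp <;> ring
end
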